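/- arXiv:1607.01231 — 3 statements merged into one kernel-verified Lean document; each statement's English description precedes it below -/
import Mathlib

section
/- Under the SQN setup, suppose in addition that the stepsizes satisfy α_k ≤ κ_lo/(L·κ_hi²) for all k ≥ 1. Then for every k ≥ 1, almost surely 𝔼[f(x_{k+1}) | ℱ_{k−1}] ≤ f(x_k) − (1/2)·α_k·κ_lo·‖∇f(x_k)‖² + (L·σ²·κ_hi²/(2·m_k))·α_k². -/
open MeasureTheory ProbabilityTheory Filter

/-!
A Lipschitz gradient gives the quadratic bound `f (x + d) ≤ f x + ⟪∇f x, d⟫ + L / 2 * ‖d‖ ^ 2`.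
Conditioning it at `d = -α • H g` needs two facts: `H` is known at the time of conditioning, so
`d` has conditional mean `-α • H (∇f x)`, and `𝔼[‖g‖²]` splits into `‖∇f x‖²` plus the variance.
Coercivity of `H` makes the first-order term at most `-α κlo ‖∇f x‖²`, and the stepsize bound lets
the bias part of the second-order term, `L κhi² α² / 2 * ‖∇f x‖²`, cost at most half of that.
-/

open scoped Gradient InnerProductSpace NNReal

section Taylor

variable {E F : Type*} [NormedAddCommGroup E] [NormedSpace ℝ E]
  [NormedAddCommGroup F] [NormedSpace ℝ F] {L : ℝ≥0}

lemma norm_sub_sub_fderiv_le_of_lipschitzWith_fderiv {f : E → F} (hf : Differentiable ℝ f)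
    (hL : LipschitzWith L (fderiv ℝ f)) (x d : E) :
    ‖f (x + d) - f x - fderiv ℝ f x d‖ ≤ L / 2 * ‖d‖ ^ 2 := by
  let remainder : ℝ → F := fun t => f (x + t • d) - f x - t • fderiv ℝ f x d
  have hasDerivAt_remainder (t : ℝ) :
      HasDerivAt remainder (fderiv ℝ f (x + t • d) d - fderiv ℝ f x d) t := by
    have hline : HasDerivAt (fun t : ℝ => x + t • d) d t := by
      simpa using ((hasDerivAt_id t).smul_const d).const_add x
    have hlinear : HasDerivAt (fun t : ℝ => t • fderiv ℝ f x d) (fderiv ℝ f x d) t := by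
      simpa using (hasDerivAt_id t).smul_const (fderiv ℝ f x d)
    exact (((hf _).hasFDerivAt.comp_hasDerivAt t hline).sub_const (f x)).sub hlinear
  have hasDerivAt_bound (t : ℝ) :
      HasDerivAt (fun t : ℝ => L / 2 * ‖d‖ ^ 2 * t ^ 2) (L * ‖d‖ ^ 2 * t) t := by
    refine ((hasDerivAt_pow 2 t).const_mul (L / 2 * ‖d‖ ^ 2)).congr_deriv ?_
    push_cast
    ring
  have norm_deriv_le (t : ℝ) (ht : t ∈ Set.Ico (0 : ℝ) 1) :
      ‖fderiv ℝ f (x + t • d) d - fderiv ℝ f x d‖ ≤ L * ‖d‖ ^ 2 * t :=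
    calc ‖(fderiv ℝ f (x + t • d) - fderiv ℝ f x) d‖
        ≤ ‖fderiv ℝ f (x + t • d) - fderiv ℝ f x‖ * ‖d‖ := ContinuousLinearMap.le_opNorm _ _
      _ ≤ L * ‖t • d‖ * ‖d‖ := by
          gcongr
          simpa using hL.norm_sub_le (x + t • d) x
      _ = L * ‖d‖ ^ 2 * t := by
          rw [norm_smul, Real.norm_of_nonneg ht.1]
          ring
  have norm_remainder_le := image_norm_le_of_norm_deriv_right_le_deriv_boundary
    (fun t _ => (hasDerivAt_remainder t).continuousAt.continuousWithinAt)
    (fun t _ => (hasDerivAt_remainder t).hasDerivWithinAt)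
    (by simp [remainder]) hasDerivAt_bound norm_deriv_le (Set.right_mem_Icc.2 zero_le_one)
  simpa [remainder] using norm_remainder_le

end Taylor

section LipschitzGradient

variable {E : Type*} [NormedAddCommGroup E] [InnerProductSpace ℝ E] [CompleteSpace E]
  {f : E → ℝ} {L : ℝ≥0}

lemma lipschitzWith_fderiv_of_lipschitzWith_gradient (hL : LipschitzWith L (∇ f)) :
    LipschitzWith L (fderiv ℝ f) := by
  rw [← toDual_comp_gradient, ← one_mul L]
  exact (InnerProductSpace.toDual ℝ E).lipschitz.comp hL

lemma abs_sub_sub_inner_gradient_le (hf : Differentiable ℝ f) (hL : LipschitzWith L (∇ f))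
    (x d : E) : |f (x + d) - f x - ⟪∇ f x, d⟫_ℝ| ≤ L / 2 * ‖d‖ ^ 2 := by
  simpa only [← toDual_gradient, InnerProductSpace.toDual_apply_apply, Real.norm_eq_abs] using
    norm_sub_sub_fderiv_le_of_lipschitzWith_fderiv hf
      (lipschitzWith_fderiv_of_lipschitzWith_gradient hL) x d

end LipschitzGradient

section LoewnerOrder

variable {𝕜 E : Type*} [RCLike 𝕜] [NormedAddCommGroup E] [InnerProductSpace 𝕜 E]
  {T : E →L[𝕜] E}

lemma mul_sq_norm_le_re_inner_of_smul_one_le {a : ℝ} (hT : (a : 𝕜) • 1 ≤ T) (u : E) :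
    a * ‖u‖ ^ 2 ≤ RCLike.re ⟪T u, u⟫_𝕜 := by
  simpa [inner_sub_left, inner_smul_left] using hT.re_inner_nonneg_left u

lemma re_inner_le_mul_sq_norm_of_le_smul_one {b : ℝ} (hT : T ≤ (b : 𝕜) • 1) (u : E) :
    RCLike.re ⟪T u, u⟫_𝕜 ≤ b * ‖u‖ ^ 2 := by
  simpa [inner_sub_left, inner_smul_left] using hT.re_inner_nonneg_left u

lemma opNorm_le_of_isPositive_of_le_smul_one {b : ℝ} (hb : 0 ≤ b) (hpos : T.IsPositive)
    (hT : T ≤ (b : 𝕜) • 1) : ‖T‖ ≤ b := by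
  rw [T.norm_eq_iSup_rayleighQuotient hpos.isSymmetric]
  refine ciSup_le fun u => ?_
  have hnonneg : 0 ≤ T.rayleighQuotient u :=
    div_nonneg (hpos.re_inner_nonneg_left u) (sq_nonneg _)
  rw [abs_of_nonneg hnonneg]
  exact div_le_of_le_mul₀ (sq_nonneg _) hb (re_inner_le_mul_sq_norm_of_le_smul_one hT u)

end LoewnerOrder

section Matrix

variable {𝕜 ι : Type*} [RCLike 𝕜] [Fintype ι] [DecidableEq ι]

open scoped ComplexOrder in
lemma toEuclideanCLM_le_toEuclideanCLM_iff {A B : Matrix ι ι 𝕜} :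
    Matrix.toEuclideanCLM (𝕜 := 𝕜) A ≤ Matrix.toEuclideanCLM (𝕜 := 𝕜) B ↔ (B - A).PosSemidef := by
  rw [ContinuousLinearMap.le_def, ← map_sub, ← Matrix.isPositive_toEuclideanLin_iff]
  rfl

open scoped ComplexOrder in
lemma mul_sq_norm_le_re_inner_toEuclideanCLM {A : Matrix ι ι 𝕜} {a : ℝ}
    (hA : (A - (a : 𝕜) • 1).PosSemidef) (u : EuclideanSpace 𝕜 ι) :
    a * ‖u‖ ^ 2 ≤ RCLike.re ⟪Matrix.toEuclideanCLM (𝕜 := 𝕜) A u, u⟫_𝕜 := by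
  refine mul_sq_norm_le_re_inner_of_smul_one_le ?_ u
  simpa only [map_smul, map_one] using toEuclideanCLM_le_toEuclideanCLM_iff.2 hA

open scoped ComplexOrder in
lemma opNorm_toEuclideanCLM_le {A : Matrix ι ι 𝕜} {b : ℝ} (hb : 0 ≤ b) (hA : A.PosSemidef)
    (hAb : ((b : 𝕜) • 1 - A).PosSemidef) : ‖Matrix.toEuclideanCLM (𝕜 := 𝕜) A‖ ≤ b := by
  have hpos : (Matrix.toEuclideanCLM (𝕜 := 𝕜) A).IsPositive :=
    Matrix.isPositive_toEuclideanLin_iff.2 hA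
  refine opNorm_le_of_isPositive_of_le_smul_one hb hpos ?_
  simpa only [map_smul, map_one] using toEuclideanCLM_le_toEuclideanCLM_iff.2 hAb

lemma stronglyMeasurable_toEuclideanCLM {Ω : Type*} {m : MeasurableSpace Ω}
    {A : Ω → Matrix ι ι 𝕜} (hA : ∀ i j, Measurable fun ω => A ω i j) :
    StronglyMeasurable fun ω => Matrix.toEuclideanCLM (𝕜 := 𝕜) (A ω) := by
  have hA' : Measurable fun ω i j => A ω i j :=
    measurable_pi_lambda _ fun i => measurable_pi_lambda _ (hA i)
  have hcont : Continuous (Matrix.toEuclideanCLM (n := ι) (𝕜 := 𝕜)) :=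
    (Matrix.toEuclideanCLM (n := ι) (𝕜 := 𝕜)).toAlgEquiv.toLinearMap.continuous_of_finiteDimensional
  exact hcont.comp_stronglyMeasurable hA'.stronglyMeasurable

end Matrix

section ConditionalInner

variable {Ω : Type*} {m mΩ : MeasurableSpace Ω} {μ : Measure Ω}

lemma integrable_inner_of_memLp_two {𝕜 E : Type*} [RCLike 𝕜] [NormedAddCommGroup E]
    [InnerProductSpace 𝕜 E] {u v : Ω → E} (hu : MemLp u 2 μ) (hv : MemLp v 2 μ) :
    Integrable (fun ω => ⟪u ω, v ω⟫_𝕜) μ :=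
  memLp_one_iff_integrable.1 <| hu.of_bilin (fun a b => ⟪a, b⟫_𝕜) 1 hv (hu.1.inner hv.1) <|
    ae_of_all _ fun ω => by simpa using nnnorm_inner_le_nnnorm (𝕜 := 𝕜) (u ω) (v ω)

variable {E : Type*} [NormedAddCommGroup E] [InnerProductSpace ℝ E] [CompleteSpace E]
  [IsFiniteMeasure μ]

lemma condExp_inner_of_stronglyMeasurable_left {u v : Ω → E} (hum : StronglyMeasurable[m] u)
    (hu : MemLp u 2 μ) (hv : MemLp v 2 μ) :
    μ[fun ω => ⟪u ω, v ω⟫_ℝ | m] =ᵐ[μ] fun ω => ⟪u ω, (μ[v | m]) ω⟫_ℝ :=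
  condExp_bilin_of_stronglyMeasurable_left (innerSL ℝ) hum (integrable_inner_of_memLp_two hu hv)
    (hv.integrable one_le_two)

lemma condExp_sq_norm_ae_eq (hm : m ≤ mΩ) {g : Ω → E} (hg : MemLp g 2 μ) :
    μ[fun ω => ‖g ω‖ ^ 2 | m] =ᵐ[μ]
      fun ω => ‖(μ[g | m]) ω‖ ^ 2 + (μ[fun ω' => ‖g ω' - (μ[g | m]) ω'‖ ^ 2 | m]) ω := by
  set G : Ω → E := μ[g | m] with hG_def
  have hG : MemLp G 2 μ := hg.condExp one_le_two
  have hGm : StronglyMeasurable[m] G := stronglyMeasurable_condExp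
  have hint_G : Integrable (fun ω => ‖G ω‖ ^ 2) μ := hG.integrable_norm_pow two_ne_zero
  have hcondExp_G : μ[fun ω => ‖G ω‖ ^ 2 | m] = fun ω => ‖G ω‖ ^ 2 :=
    condExp_of_stronglyMeasurable hm (hGm.norm.pow 2) hint_G
  have hint_sub : Integrable (fun ω => ‖g ω - G ω‖ ^ 2) μ :=
    (hg.sub hG).integrable_norm_pow two_ne_zero
  have hint_inner : Integrable (fun ω => ⟪G ω, g ω⟫_ℝ) μ := integrable_inner_of_memLp_two hG hg
  have expand : (fun ω => ‖g ω‖ ^ 2) =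
      ((fun ω => ‖g ω - G ω‖ ^ 2) + (2 : ℝ) • fun ω => ⟪G ω, g ω⟫_ℝ) - fun ω => ‖G ω‖ ^ 2 := by
    ext ω
    simp only [Pi.add_apply, Pi.sub_apply, Pi.smul_apply, smul_eq_mul, norm_sub_sq_real,
      real_inner_comm (g ω) (G ω)]
    ring
  rw [expand]
  filter_upwards [condExp_sub (hint_sub.add (hint_inner.smul (2 : ℝ))) hint_G m,
    condExp_add hint_sub (hint_inner.smul (2 : ℝ)) m,
    condExp_smul (μ := μ) (2 : ℝ) (fun ω => ⟪G ω, g ω⟫_ℝ) m,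
    condExp_inner_of_stronglyMeasurable_left hGm hG hg] with ω hsub hadd hsmul hinner
  rw [hsub, Pi.sub_apply, hadd, Pi.add_apply, hsmul, Pi.smul_apply, hinner,
    hcondExp_G, ← hG_def, real_inner_self_eq_norm_sq, smul_eq_mul]
  ring

end ConditionalInner

section RandomOperator

variable {Ω 𝕜 E F : Type*} {m mΩ : MeasurableSpace Ω} {μ : Measure Ω}
  [NormedAddCommGroup E] [NormedAddCommGroup F] {u : Ω → E} {C : ℝ}

lemma memLp_clm_apply [NontriviallyNormedField 𝕜] [NormedSpace 𝕜 E] [NormedSpace 𝕜 F]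
    {p : ENNReal} {T : Ω → E →L[𝕜] F} (hT : AEStronglyMeasurable T μ)
    (hTC : ∀ᵐ ω ∂μ, ‖T ω‖ ≤ C) (hu : MemLp u p μ) : MemLp (fun ω => T ω (u ω)) p μ :=
  hu.of_le_mul
    (isBoundedBilinearMap_apply.continuous.comp_aestronglyMeasurable (hT.prodMk hu.1))
    (hTC.mono fun ω hω => (T ω).le_of_opNorm_le hω (u ω))

variable [NormedSpace ℝ E] [NormedSpace ℝ F] {T : Ω → E →L[ℝ] F}

lemma condExp_clm_apply_of_stronglyMeasurable [CompleteSpace E] [CompleteSpace F] (hm : m ≤ mΩ)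
    (hT : StronglyMeasurable[m] T) (hTC : ∀ᵐ ω ∂μ, ‖T ω‖ ≤ C) (hu : Integrable u μ) :
    μ[fun ω => T ω (u ω) | m] =ᵐ[μ] fun ω => T ω ((μ[u | m]) ω) :=
  condExp_bilin_of_stronglyMeasurable_left (.id ℝ (E →L[ℝ] F)) hT
    (memLp_one_iff_integrable.1 <|
      memLp_clm_apply (hT.mono hm).aestronglyMeasurable hTC (memLp_one_iff_integrable.2 hu)) hu

lemma condExp_sq_norm_clm_apply_le (hT : AEStronglyMeasurable T μ)
    (hTC : ∀ᵐ ω ∂μ, ‖T ω‖ ≤ C) (hu : MemLp u 2 μ) :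
    μ[fun ω => ‖T ω (u ω)‖ ^ 2 | m] ≤ᵐ[μ] C ^ 2 • μ[fun ω => ‖u ω‖ ^ 2 | m] := by
  refine (condExp_mono ((memLp_clm_apply hT hTC hu).integrable_norm_pow two_ne_zero)
    ((hu.integrable_norm_pow two_ne_zero).smul (C ^ 2)) ?_).trans (condExp_smul _ _ _).le
  filter_upwards [hTC] with ω hω
  calc ‖T ω (u ω)‖ ^ 2 ≤ (C * ‖u ω‖) ^ 2 := by
        gcongr
        exact (T ω).le_of_opNorm_le hω _
    _ = C ^ 2 * ‖u ω‖ ^ 2 := mul_pow _ _ _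

end RandomOperator

section Descent

variable {Ω : Type*} {m mΩ : MeasurableSpace Ω} {μ : Measure Ω}
  {E : Type*} [NormedAddCommGroup E] [InnerProductSpace ℝ E] [CompleteSpace E]
  {f : E → ℝ} {L : ℝ≥0} {x d : Ω → E}

lemma integrable_comp_add_of_lipschitzWith_gradient (hf : Differentiable ℝ f)
    (hL : LipschitzWith L (∇ f)) (hx : AEStronglyMeasurable x μ)
    (hfx : Integrable (fun ω => f (x ω)) μ) (hgrad : MemLp (fun ω => ∇ f (x ω)) 2 μ)
    (hd : MemLp d 2 μ) : Integrable (fun ω => f (x ω + d ω)) μ := by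
  have hint_inner := integrable_inner_of_memLp_two (𝕜 := ℝ) hgrad hd
  have hmeas : AEStronglyMeasurable (fun ω => f (x ω + d ω)) μ :=
    hf.continuous.comp_aestronglyMeasurable (hx.add hd.1)
  have hint_remainder :
      Integrable (fun ω => f (x ω + d ω) - f (x ω) - ⟪∇ f (x ω), d ω⟫_ℝ) μ :=
    ((hd.integrable_norm_pow two_ne_zero).const_mul (L / 2 : ℝ)).mono'
      ((hmeas.sub hfx.1).sub hint_inner.1)
      (ae_of_all _ fun ω => abs_sub_sub_inner_gradient_le hf hL (x ω) (d ω))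
  refine ((hint_remainder.add hint_inner).add hfx).congr (ae_of_all _ fun ω => ?_)
  simp

lemma condExp_comp_add_le [IsFiniteMeasure μ] (hm : m ≤ mΩ) (hf : Differentiable ℝ f)
    (hL : LipschitzWith L (∇ f)) (hx : StronglyMeasurable[m] x)
    (hfx : Integrable (fun ω => f (x ω)) μ) (hgrad : MemLp (fun ω => ∇ f (x ω)) 2 μ)
    (hd : MemLp d 2 μ) :
    ∀ᵐ ω ∂μ, (μ[fun ω' => f (x ω' + d ω') | m]) ω ≤
      f (x ω) + ⟪∇ f (x ω), (μ[d | m]) ω⟫_ℝ + L / 2 * (μ[fun ω' => ‖d ω'‖ ^ 2 | m]) ω := by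
  have hint_inner := integrable_inner_of_memLp_two (𝕜 := ℝ) hgrad hd
  have hint_sq := (hd.integrable_norm_pow two_ne_zero).smul (L / 2 : ℝ)
  have hle : (fun ω => f (x ω + d ω)) ≤ᵐ[μ]
      ((fun ω => f (x ω)) + fun ω => ⟪∇ f (x ω), d ω⟫_ℝ) + (L / 2 : ℝ) • fun ω => ‖d ω‖ ^ 2 :=
    ae_of_all _ fun ω => by
      have := le_of_abs_le (abs_sub_sub_inner_gradient_le hf hL (x ω) (d ω))
      simp only [Pi.add_apply, Pi.smul_apply, smul_eq_mul]
      linarith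
  filter_upwards [condExp_mono (m := m) (integrable_comp_add_of_lipschitzWith_gradient hf hL
      (hx.mono hm).aestronglyMeasurable hfx hgrad hd) ((hfx.add hint_inner).add hint_sq) hle,
    condExp_add (hfx.add hint_inner) hint_sq m, condExp_add hfx hint_inner m,
    condExp_smul (μ := μ) (L / 2 : ℝ) (fun ω => ‖d ω‖ ^ 2) m,
    condExp_inner_of_stronglyMeasurable_left (hL.continuous.comp_stronglyMeasurable hx) hgrad hd]
    with ω hmono hadd hadd' hsmul hinner
  rwa [hadd, Pi.add_apply, hadd', Pi.add_apply, hsmul, Pi.smul_apply, hinner, smul_eq_mul,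
    condExp_of_stronglyMeasurable hm (hf.continuous.comp_stronglyMeasurable hx) hfx] at hmono

lemma condExp_comp_add_clm_apply_le [IsFiniteMeasure μ] (hm : m ≤ mΩ) (hf : Differentiable ℝ f)
    (hL : LipschitzWith L (∇ f)) (hx : StronglyMeasurable[m] x)
    (hfx : Integrable (fun ω => f (x ω)) μ) {g : Ω → E} (hg : MemLp g 2 μ)
    (hmean : μ[g | m] =ᵐ[μ] fun ω => ∇ f (x ω)) {T : Ω → E →L[ℝ] E} {C : ℝ}
    (hT : StronglyMeasurable[m] T) (hTC : ∀ᵐ ω ∂μ, ‖T ω‖ ≤ C) :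
    ∀ᵐ ω ∂μ, (μ[fun ω' => f (x ω' + T ω' (g ω')) | m]) ω ≤
      f (x ω) + ⟪∇ f (x ω), T ω (∇ f (x ω))⟫_ℝ + L / 2 * (C ^ 2 *
        (‖∇ f (x ω)‖ ^ 2 + (μ[fun ω' => ‖g ω' - ∇ f (x ω')‖ ^ 2 | m]) ω)) := by
  have hgrad : MemLp (fun ω => ∇ f (x ω)) 2 μ := (hg.condExp one_le_two).ae_eq hmean
  have hT' : AEStronglyMeasurable T μ := (hT.mono hm).aestronglyMeasurable
  have hvariance : μ[fun ω => ‖g ω - (μ[g | m]) ω‖ ^ 2 | m] =ᵐ[μ]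
      μ[fun ω => ‖g ω - ∇ f (x ω)‖ ^ 2 | m] :=
    condExp_congr_ae (hmean.mono fun ω hω => by simp only [hω])
  filter_upwards [condExp_comp_add_le hm hf hL hx hfx hgrad (memLp_clm_apply hT' hTC hg),
    condExp_clm_apply_of_stronglyMeasurable hm hT hTC (hg.integrable one_le_two),
    condExp_sq_norm_clm_apply_le (m := m) hT' hTC hg, condExp_sq_norm_ae_eq hm hg, hmean, hvariance]
    with ω hdescent happly hsq hsplit hmean hvariance
  rw [happly, hmean] at hdescent
  rw [Pi.smul_apply, smul_eq_mul, hsplit, hmean, hvariance] at hsq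
  exact hdescent.trans (by gcongr)

end Descent

theorem sqn_descent_lemma_general {E : Type*} [NormedAddCommGroup E] [InnerProductSpace ℝ E]
    [CompleteSpace E] {Ω : Type*} {m mΩ : MeasurableSpace Ω} {μ : Measure Ω} [IsFiniteMeasure μ]
    (hm : m ≤ mΩ) {f : E → ℝ} {L : ℝ≥0} {κlo κhi α v : ℝ} {x g : Ω → E} {H : Ω → E →L[ℝ] E}
    (hf : Differentiable ℝ f) (hLip : LipschitzWith L (∇ f))
    (hx : StronglyMeasurable[m] x) (hH : StronglyMeasurable[m] H)
    (hfx : Integrable (fun ω => f (x ω)) μ) (hg : MemLp g 2 μ)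
    (hunbiased : μ[g | m] =ᵐ[μ] fun ω => ∇ f (x ω))
    (hvar : ∀ᵐ ω ∂μ, (μ[fun ω' => ‖g ω' - ∇ f (x ω')‖ ^ 2 | m]) ω ≤ v)
    (hHlo : ∀ᵐ ω ∂μ, ∀ u, κlo * ‖u‖ ^ 2 ≤ ⟪H ω u, u⟫_ℝ) (hHhi : ∀ᵐ ω ∂μ, ‖H ω‖ ≤ κhi)
    (hα : 0 ≤ α) (hstep : α * (L * κhi ^ 2) ≤ κlo) :
    ∀ᵐ ω ∂μ, (μ[fun ω' => f (x ω' - α • H ω' (g ω')) | m]) ω ≤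
      f (x ω) - 1 / 2 * α * κlo * ‖∇ f (x ω)‖ ^ 2 + L * v * κhi ^ 2 / 2 * α ^ 2 := by
  have hstepNorm : ∀ᵐ ω ∂μ, ‖(-α) • H ω‖ ≤ α * κhi := by
    filter_upwards [hHhi] with ω hω
    rw [norm_smul, norm_neg, Real.norm_of_nonneg hα]
    gcongr
  filter_upwards [condExp_comp_add_clm_apply_le hm hf hLip hx hfx hg hunbiased
    (hH.const_smul (-α)) hstepNorm, hvar, hHlo] with ω hdescent hvar hHlo
  simp only [Pi.smul_apply, neg_smul, neg_apply, smul_apply, ← sub_eq_add_neg,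
    inner_neg_right, real_inner_smul_right] at hdescent
  rw [real_inner_comm] at hdescent
  set G := ∇ f (x ω)
  have hfirst : α * (κlo * ‖G‖ ^ 2) ≤ α * ⟪H ω G, G⟫_ℝ := by gcongr; exact hHlo G
  have hbias : α * (α * (L * κhi ^ 2)) * ‖G‖ ^ 2 ≤ α * κlo * ‖G‖ ^ 2 := by gcongr
  have hnoise : L / 2 * (α * κhi) ^ 2 * (μ[fun ω' => ‖g ω' - ∇ f (x ω')‖ ^ 2 | m]) ω ≤
      L / 2 * (α * κhi) ^ 2 * v := by gcongr
  linarith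

theorem sqn_descent_lemma
    {n : ℕ} (hn : 1 ≤ n)
    {Ω : Type} {mΩ : MeasurableSpace Ω} (μ : Measure Ω) [IsProbabilityMeasure μ]
    (ℱ : Filtration ℕ mΩ)
    (f : EuclideanSpace ℝ (Fin n) → ℝ) (flow L κlo κhi σ : ℝ)
    (α : ℕ → ℝ) (m : ℕ → ℕ)
    (x : ℕ → Ω → EuclideanSpace ℝ (Fin n))
    (H : ℕ → Ω → Matrix (Fin n) (Fin n) ℝ)
    (g : ℕ → Ω → EuclideanSpace ℝ (Fin n))
    (x1 : EuclideanSpace ℝ (Fin n))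
    -- AS.1
    (hf : ContDiff ℝ 1 f)
    (hflow : ∀ z, flow ≤ f z)
    (hL : 0 < L)
    (hLip : LipschitzWith L.toNNReal (fun z => gradient f z))
    -- constants, stepsizes, batch sizes
    (hκlo : 0 < κlo) (hκ : κlo ≤ κhi) (hσ : 0 < σ)
    (hα : ∀ k, 1 ≤ k → 0 < α k) (hm : ∀ k, 1 ≤ k → 1 ≤ m k)
    -- the SQN iteration
    (hx1 : ∀ ω, x 1 ω = x1)
    (hxmeas : ∀ k, 1 ≤ k → Measurable[ℱ (k - 1)] (x k))
    (hHsymm : ∀ k, 1 ≤ k → ∀ ω, (H k ω).IsSymm)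
    (hHmeas : ∀ k, 1 ≤ k → ∀ i j, Measurable[ℱ (k - 1)] (fun ω => H k ω i j))
    (hgmeas : ∀ k, 1 ≤ k → Measurable[ℱ k] (g k))
    (hiter : ∀ k, 1 ≤ k → ∀ ω,
      x (k + 1) ω = x k ω - α k • (Matrix.toEuclideanLin (H k ω)) (g k ω))
    -- AS.2 : unbiasedness and bounded variance
    (hunbiased : ∀ k, 1 ≤ k →
      μ[g k | ℱ (k - 1)] =ᵐ[μ] fun ω => gradient f (x k ω))
    (hvar : ∀ k, 1 ≤ k → ∀ᵐ ω ∂μ,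
      (μ[fun ω' => ‖g k ω' - gradient f (x k ω')‖ ^ 2 | ℱ (k - 1)]) ω ≤ σ ^ 2 / (m k : ℝ))
    -- AS.3 : eigenvalue bounds on H k
    (hH : ∀ k, 1 ≤ k → ∀ᵐ ω ∂μ,
      (H k ω - κlo • (1 : Matrix (Fin n) (Fin n) ℝ)).PosSemidef ∧
      (κhi • (1 : Matrix (Fin n) (Fin n) ℝ) - H k ω).PosSemidef)
    -- integrability
    (hint_f : ∀ k, 1 ≤ k → Integrable (fun ω => f (x k ω)) μ)
    (hint_grad : ∀ k, 1 ≤ k → Integrable (fun ω => ‖gradient f (x k ω)‖ ^ 2) μ)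
    (hint_g : ∀ k, 1 ≤ k → Integrable (fun ω => ‖g k ω‖ ^ 2) μ)
    -- stepsize condition of the statement
    (hstep : ∀ k, 1 ≤ k → α k ≤ κlo / (L * κhi ^ 2))
    (k : ℕ) (hk : 1 ≤ k) :
    ∀ᵐ ω ∂μ,
      (μ[fun ω' => f (x (k + 1) ω') | ℱ (k - 1)]) ω ≤
        f (x k ω) - (1 / 2) * α k * κlo * ‖gradient f (x k ω)‖ ^ 2
          + (L * σ ^ 2 * κhi ^ 2 / (2 * (m k : ℝ))) * α k ^ 2 := by
  have hg : MemLp (g k) 2 μ := (memLp_two_iff_integrable_sq_norm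
    ((hgmeas k hk).mono (ℱ.le k) le_rfl).aestronglyMeasurable).2 (hint_g k hk)
  have hHlo := (hH k hk).mono fun ω hω => mul_sq_norm_le_re_inner_toEuclideanCLM hω.1
  have hHhi := (hH k hk).mono fun ω hω => opNorm_toEuclideanCLM_le (hκlo.le.trans hκ)
    (by simpa using hω.1.add (Matrix.PosSemidef.one.smul hκlo.le)) hω.2
  have hstep' : α k * (L.toNNReal * κhi ^ 2) ≤ κlo := by
    have hκhi : 0 < κhi := hκlo.trans_le hκ
    rw [Real.coe_toNNReal L hL.le]
    exact (le_div_iff₀ (by positivity)).1 (hstep k hk)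
  filter_upwards [sqn_descent_lemma_general (ℱ.le (k - 1)) (hf.differentiable one_ne_zero) hLip
    (hxmeas k hk).stronglyMeasurable (stronglyMeasurable_toEuclideanCLM (hHmeas k hk))
    (hint_f k hk) hg (hunbiased k hk) (hvar k hk) hHlo hHhi (hα k hk).le hstep'] with ω hdescent
  rw [Real.coe_toNNReal L hL.le] at hdescent
  simp only [hiter k hk]
  exact hdescent.trans_eq (by ring)
end

section
/- Let B be a symmetric positive definite n×n real matrix, let s ∈ ℝ^n with s ≠ 0, and let y ∈ ℝ^n. Define the damping parameter θ = 0.75·(sᵀBs)/(sᵀBs − sᵀy) if sᵀy < 0.25·sᵀBs and θ = 1 otherwise, and set ȳ = θ·y + (1−θ)·Bs. Then: (i) sᵀȳ ≥ 0.25·sᵀBs > 0; (ii) the damped BFGS update B⁺ = B + (ȳȳᵀ)/(sᵀȳ) − (Bs)(Bs)ᵀ/(sᵀBs) is symmetric positive definite; and (iii) with ρ = 1/(sᵀȳ) and H = B⁻¹, the matrix H⁺ = (I − ρ·sȳᵀ)·H·(I − ρ·ȳsᵀ) + ρ·ssᵀ is symmetric positive definite. -/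
open Matrix

/-!
Both updates are a congruence `Cᴴ * A * C` of a positive definite matrix by a rank-one perturbation
`C = 1 - c • u wᴴ` of the identity, plus a positive multiple of some `v vᴴ`. The kernel of `C` lies
in the line spanned by `u`, so as soon as `vᴴ u ≠ 0` the second term is positive wherever the first
one vanishes. For the direct update `A = B`, `u = s`, `w = B s`, `v = ȳ`; for the inverse update
`A = B⁻¹`, `u = ȳ`, `w = s`, `v = s`. In both cases `vᴴ u ≠ 0` is the curvature condition
`sᴴ ȳ > 0`, which is what damping enforces.
-/

theorem inv_pos_of_starOrderedRing {R : Type*} [DivisionRing R] [PartialOrder R] [StarRing R]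
    [StarOrderedRing R] {ρ : R} (hρ : 0 < ρ) : 0 < ρ⁻¹ := by
  have hconj : star ρ⁻¹ * ρ * ρ⁻¹ = ρ⁻¹ := by
    rw [mul_inv_cancel_right₀ hρ.ne', star_inv₀, hρ.le.isSelfAdjoint.star_eq]
  exact hconj ▸ star_left_conjugate_pos hρ (IsRegular.of_ne_zero (inv_ne_zero hρ.ne'))

section RankOneCongruence

variable {ι κ : Type*} [Fintype ι] [Fintype κ]

theorem posDef_add_of_pos_or_pos {R : Type*} [Ring R] [PartialOrder R] [StarRing R] [AddLeftMono R]
    {P Q : Matrix ι ι R} (hP : P.PosSemidef) (hQ : Q.PosSemidef)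
    (h : ∀ x, x ≠ 0 → 0 < star x ⬝ᵥ P *ᵥ x ∨ 0 < star x ⬝ᵥ Q *ᵥ x) : (P + Q).PosDef := by
  refine .of_dotProduct_mulVec_pos (hP.isHermitian.add hQ.isHermitian) fun x hx ↦ ?_
  rw [add_mulVec, dotProduct_add]
  rcases h x hx with hPx | hQx
  · exact add_pos_of_pos_of_nonneg hPx (hQ.dotProduct_mulVec_nonneg x)
  · exact add_pos_of_nonneg_of_pos (hP.dotProduct_mulVec_nonneg x) hQx

theorem eq_zero_of_one_sub_smul_vecMulVec_mulVec_eq_zero {R : Type*} [CommRing R]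
    [NoZeroDivisors R] [DecidableEq ι] {c : R} {u v w x : ι → R} (hvu : v ⬝ᵥ u ≠ 0)
    (hx : (1 - c • vecMulVec u w) *ᵥ x = 0) (hvx : v ⬝ᵥ x = 0) : x = 0 := by
  have hxu : x = (c * (w ⬝ᵥ x)) • u := by
    simpa [sub_mulVec, smul_mulVec, vecMulVec_mulVec, smul_smul, sub_eq_zero] using hx
  have hcoeff : c * (w ⬝ᵥ x) = 0 := by
    rw [hxu, dotProduct_smul, smul_eq_mul] at hvx
    exact (mul_eq_zero.mp hvx).resolve_right hvu
  rw [hxu, hcoeff, zero_smul]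

variable {K : Type*} [Field K] [PartialOrder K] [StarRing K] [StarOrderedRing K]

theorem dotProduct_smul_vecMulVec_self_star_mulVec_pos {ρ : K} (hρ : 0 < ρ) {v x : ι → K}
    (hvx : star v ⬝ᵥ x ≠ 0) : 0 < star x ⬝ᵥ (ρ • vecMulVec v (star v)) *ᵥ x := by
  have hform : star x ⬝ᵥ (ρ • vecMulVec v (star v)) *ᵥ x =
      ρ * (star (star v ⬝ᵥ x) * (star v ⬝ᵥ x)) := by
    rw [← star_dotProduct]
    simp [smul_mulVec, vecMulVec_mulVec, mul_comm]
  rw [hform]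
  exact mul_pos hρ (star_mul_self_pos (IsRegular.of_ne_zero hvx))

theorem posDef_conjTranspose_mul_mul_add_smul_vecMulVec {A : Matrix κ κ K} (hA : A.PosDef)
    {C : Matrix κ ι K} {ρ : K} (hρ : 0 < ρ) {v : ι → K}
    (hC : ∀ x, C *ᵥ x = 0 → star v ⬝ᵥ x = 0 → x = 0) :
    (Cᴴ * A * C + ρ • vecMulVec v (star v)).PosDef := by
  refine posDef_add_of_pos_or_pos (hA.posSemidef.conjTranspose_mul_mul_same C)
    ((posSemidef_vecMulVec_self_star v).smul hρ.le) fun x hx ↦ ?_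
  by_cases hCx : C *ᵥ x = 0
  · exact .inr (dotProduct_smul_vecMulVec_self_star_mulVec_pos hρ (mt (hC x hCx) hx))
  · left
    simpa only [star_mulVec, dotProduct_mulVec, vecMul_vecMul] using hA.dotProduct_mulVec_pos hCx

theorem posDef_rankOneCongruence_add_smul_vecMulVec [DecidableEq ι] {A : Matrix ι ι K}
    (hA : A.PosDef) (c : K) {ρ : K} (hρ : 0 < ρ) {u v : ι → K} (w : ι → K)
    (hvu : star v ⬝ᵥ u ≠ 0) :
    ((1 - c • vecMulVec u w)ᴴ * A * (1 - c • vecMulVec u w) +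
      ρ • vecMulVec v (star v)).PosDef :=
  posDef_conjTranspose_mul_mul_add_smul_vecMulVec hA hρ fun _ ↦
    eq_zero_of_one_sub_smul_vecMulVec_mulVec_eq_zero hvu

end RankOneCongruence

section Updates

variable {ι K : Type*} [Fintype ι] [Field K] [StarRing K]

/-- The BFGS update of a Hessian approximation `B` along the step `s` with gradient change `y`,
in its Hermitian form; over a field with trivial involution `star` disappears. -/
def bfgsUpdate (B : Matrix ι ι K) (s y : ι → K) : Matrix ι ι K :=
  B + (star s ⬝ᵥ y)⁻¹ • vecMulVec y (star y)
    - (star s ⬝ᵥ B *ᵥ s)⁻¹ • vecMulVec (B *ᵥ s) (star (B *ᵥ s))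

/-- The BFGS update of an inverse Hessian approximation `H` along the step `s` with gradient
change `y`, in its Hermitian form. -/
def bfgsInverseUpdate [DecidableEq ι] (H : Matrix ι ι K) (s y : ι → K) : Matrix ι ι K :=
  (1 - (star s ⬝ᵥ y)⁻¹ • vecMulVec s (star y)) * H * (1 - (star s ⬝ᵥ y)⁻¹ • vecMulVec y (star s))
    + (star s ⬝ᵥ y)⁻¹ • vecMulVec s (star s)

theorem isSelfAdjoint_dotProduct_mulVec_self {R : Type*} [Ring R] [StarRing R] {B : Matrix ι ι R}
    (hB : B.IsHermitian) (s : ι → R) : IsSelfAdjoint (star s ⬝ᵥ B *ᵥ s) := by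
  rw [isSelfAdjoint_iff, ← star_dotProduct, star_mulVec, hB.eq, ← dotProduct_mulVec]

theorem rankOneCongruence_eq_sub_smul_vecMulVec [DecidableEq ι] {B : Matrix ι ι K}
    (hB : B.IsHermitian) (s : ι → K) :
    (1 - (star s ⬝ᵥ B *ᵥ s)⁻¹ • vecMulVec s (star (B *ᵥ s)))ᴴ * B *
        (1 - (star s ⬝ᵥ B *ᵥ s)⁻¹ • vecMulVec s (star (B *ᵥ s))) =
      B - (star s ⬝ᵥ B *ᵥ s)⁻¹ • vecMulVec (B *ᵥ s) (star (B *ᵥ s)) := by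
  have hsB : star s ᵥ* B = star (B *ᵥ s) := by rw [star_mulVec, hB.eq]
  have hadjoint : (1 - (star s ⬝ᵥ B *ᵥ s)⁻¹ • vecMulVec s (star (B *ᵥ s)))ᴴ =
      1 - (star s ⬝ᵥ B *ᵥ s)⁻¹ • vecMulVec (B *ᵥ s) (star s) := by
    rw [conjTranspose_sub, conjTranspose_one, conjTranspose_smul, conjTranspose_vecMulVec,
      star_star, star_inv₀, (isSelfAdjoint_dotProduct_mulVec_self hB s).star_eq]
  have hannihilate : (star s ⬝ᵥ B *ᵥ s)⁻¹ • vecMulVec (B *ᵥ s) (star s) *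
      (B - (star s ⬝ᵥ B *ᵥ s)⁻¹ • vecMulVec (B *ᵥ s) (star (B *ᵥ s))) = 0 := by
    have hinv : (star s ⬝ᵥ B *ᵥ s)⁻¹ * (star s ⬝ᵥ B *ᵥ s)⁻¹ * (star s ⬝ᵥ B *ᵥ s) =
        (star s ⬝ᵥ B *ᵥ s)⁻¹ := by
      simpa only [inv_inv] using mul_self_mul_inv (star s ⬝ᵥ B *ᵥ s)⁻¹
    rw [smul_mul_assoc, Matrix.mul_sub, Matrix.mul_smul, vecMulVec_mul, hsB,
      vecMulVec_mul_vecMulVec, vecMulVec_smul, smul_sub, smul_smul, smul_smul, hinv,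
      sub_self]
  rw [hadjoint, Matrix.mul_assoc, Matrix.mul_sub, Matrix.mul_one, Matrix.mul_smul, mul_vecMulVec,
    Matrix.sub_mul, Matrix.one_mul, hannihilate, sub_zero]

variable [PartialOrder K] [StarOrderedRing K] {s y : ι → K}

theorem posDef_bfgsUpdate {B : Matrix ι ι K} (hB : B.PosDef) (hsy : 0 < star s ⬝ᵥ y) :
    (bfgsUpdate B s y).PosDef := by
  classical
  have hys : star y ⬝ᵥ s ≠ 0 := by
    rw [star_dotProduct]
    exact star_ne_zero.mpr hsy.ne'
  rw [bfgsUpdate, add_sub_right_comm, ← rankOneCongruence_eq_sub_smul_vecMulVec hB.isHermitian]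
  exact posDef_rankOneCongruence_add_smul_vecMulVec hB _ (inv_pos_of_starOrderedRing hsy) _ hys

theorem posDef_bfgsInverseUpdate [DecidableEq ι] {H : Matrix ι ι K} (hH : H.PosDef)
    (hsy : 0 < star s ⬝ᵥ y) : (bfgsInverseUpdate H s y).PosDef := by
  have hρ : 0 < (star s ⬝ᵥ y)⁻¹ := inv_pos_of_starOrderedRing hsy
  have hadjoint : 1 - (star s ⬝ᵥ y)⁻¹ • vecMulVec s (star y) =
      (1 - (star s ⬝ᵥ y)⁻¹ • vecMulVec y (star s))ᴴ := by
    rw [conjTranspose_sub, conjTranspose_one, conjTranspose_smul, conjTranspose_vecMulVec,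
      star_star, hρ.le.isSelfAdjoint.star_eq]
  rw [bfgsInverseUpdate, hadjoint]
  exact posDef_rankOneCongruence_add_smul_vecMulVec hH _ hρ _ hsy.ne'

end Updates

section Damping

variable {K : Type*} [Field K] [LinearOrder K]

/-- Powell's damping parameter with threshold `δ`, where `σ` stands for `sᵀBs` and `τ` for `sᵀy`.
In the damped case it is the value of `θ` for which `θ * τ + (1 - θ) * σ = δ * σ`. -/
def powellDamping (δ σ τ : K) : K :=
  if τ < δ * σ then (1 - δ) * σ / (σ - τ) else 1

/-- The damped gradient change `ȳ`, interpolating between `y` and `B s`. -/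
def dampedGradientChange {ι : Type*} [Fintype ι] (δ : K) (B : Matrix ι ι K) (s y : ι → K) :
    ι → K :=
  powellDamping δ (s ⬝ᵥ B *ᵥ s) (s ⬝ᵥ y) • y +
    (1 - powellDamping δ (s ⬝ᵥ B *ᵥ s) (s ⬝ᵥ y)) • B *ᵥ s

variable [IsStrictOrderedRing K]

theorem le_powellDamping_combination {δ σ : K} (hδ : δ ≤ 1) (hσ : 0 ≤ σ) (τ : K) :
    δ * σ ≤ powellDamping δ σ τ * τ + (1 - powellDamping δ σ τ) * σ := by
  unfold powellDamping
  split_ifs with hτ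
  · have hne : σ - τ ≠ 0 := (sub_pos.mpr (hτ.trans_le (mul_le_of_le_one_left hσ hδ))).ne'
    apply le_of_eq
    field_simp
    ring
  · simpa using hτ

theorem le_dotProduct_dampedGradientChange {ι : Type*} [Fintype ι] {δ : K} (hδ : δ ≤ 1)
    {B : Matrix ι ι K} {s : ι → K} (hs : 0 ≤ s ⬝ᵥ B *ᵥ s) (y : ι → K) :
    δ * (s ⬝ᵥ B *ᵥ s) ≤ s ⬝ᵥ dampedGradientChange δ B s y := by
  simpa [dampedGradientChange] using le_powellDamping_combination hδ hs (s ⬝ᵥ y)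

end Damping

theorem damped_bfgs_preserves_posdef_general {ι K : Type*} [Fintype ι] [DecidableEq ι]
    [Field K] [LinearOrder K] [StarRing K] [TrivialStar K] [StarOrderedRing K]
    {δ : K} (hδ₀ : 0 < δ) (hδ₁ : δ ≤ 1) {B : Matrix ι ι K} (hB : B.PosDef)
    {s : ι → K} (hs : s ≠ 0) (y : ι → K) :
    (δ * (s ⬝ᵥ B *ᵥ s) ≤ s ⬝ᵥ dampedGradientChange δ B s y ∧ 0 < δ * (s ⬝ᵥ B *ᵥ s)) ∧
    (bfgsUpdate B s (dampedGradientChange δ B s y)).PosDef ∧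
    (bfgsInverseUpdate B⁻¹ s (dampedGradientChange δ B s y)).PosDef := by
  have hσ : 0 < s ⬝ᵥ B *ᵥ s := by simpa using hB.dotProduct_mulVec_pos hs
  have hδσ : 0 < δ * (s ⬝ᵥ B *ᵥ s) := mul_pos hδ₀ hσ
  have hle := le_dotProduct_dampedGradientChange hδ₁ hσ.le y
  have hcurv : 0 < star s ⬝ᵥ dampedGradientChange δ B s y := by
    simpa using hδσ.trans_le hle
  exact ⟨⟨hle, hδσ⟩, posDef_bfgsUpdate hB hcurv, posDef_bfgsInverseUpdate hB.inv hcurv⟩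

theorem damped_bfgs_preserves_posdef
    {n : ℕ} (hn : 1 ≤ n)
    (B : Matrix (Fin n) (Fin n) ℝ) (hB : B.PosDef)
    (s y : Fin n → ℝ) (hs : s ≠ 0)
    (θ : ℝ)
    (hθ : θ = if s ⬝ᵥ y < 0.25 * (s ⬝ᵥ B.mulVec s)
        then 0.75 * (s ⬝ᵥ B.mulVec s) / (s ⬝ᵥ B.mulVec s - s ⬝ᵥ y) else 1)
    (ybar : Fin n → ℝ) (hybar : ybar = θ • y + (1 - θ) • B.mulVec s) :
    (0.25 * (s ⬝ᵥ B.mulVec s) ≤ s ⬝ᵥ ybar ∧ 0 < 0.25 * (s ⬝ᵥ B.mulVec s)) ∧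
    (B + (s ⬝ᵥ ybar)⁻¹ • Matrix.vecMulVec ybar ybar
       - (s ⬝ᵥ B.mulVec s)⁻¹ • Matrix.vecMulVec (B.mulVec s) (B.mulVec s)).PosDef ∧
    ((1 - (s ⬝ᵥ ybar)⁻¹ • Matrix.vecMulVec s ybar) * B⁻¹ *
       (1 - (s ⬝ᵥ ybar)⁻¹ • Matrix.vecMulVec ybar s)
       + (s ⬝ᵥ ybar)⁻¹ • Matrix.vecMulVec s s).PosDef := by
  have hdamped : ybar = dampedGradientChange 0.25 B s y := by
    rw [hybar, hθ, dampedGradientChange, powellDamping, show (1 - 0.25 : ℝ) = 0.75 by norm_num]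
  subst hdamped
  simpa only [bfgsUpdate, bfgsInverseUpdate, star_trivial] using
    damped_bfgs_preserves_posdef_general (by norm_num) (by norm_num) hB hs y
end

section
/- Let κ > 0 and δ > 0, let γ ∈ [δ, κ+δ], let s ∈ ℝ^n with s ≠ 0, and let y ∈ ℝ^n with ‖y‖ ≤ κ‖s‖. Define the damping parameter θ = 0.75·γ·(sᵀs)/(γ·sᵀs − sᵀy) if sᵀy < 0.25·γ·sᵀs and θ = 1 otherwise, and set ȳ = θ·y + (1−θ)·γ·s. Then sᵀȳ ≥ 0.25·γ·sᵀs > 0 and (ȳᵀȳ)/(sᵀȳ) ≤ 4κ²/δ + 4(κ+δ). -/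
open scoped RealInnerProductSpace

/-!
Damping replaces `y` by a convex combination `ȳ` of `y` and `γ • s`. The parameter is the largest
one in `[0, 1]` for which `⟪s, ȳ⟫ ≥ η * γ * ⟪s, s⟫`, so `⟪s, ȳ⟫` is exactly the maximum of
`η * γ * ⟪s, s⟫` and `⟪s, y⟫`. Convexity of the norm gives `‖ȳ‖ ≤ max κ γ * ‖s‖`, and dividing the
square of this bound by the curvature bound controls `⟪ȳ, ȳ⟫ / ⟪s, ȳ⟫`.
-/

section Damping

variable {E : Type*} [NormedAddCommGroup E] [InnerProductSpace ℝ E]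
  {η κ δ γ Γ : ℝ} {s y : E}

/-- Powell's damping parameter `θ` for the pair `(s, y)`, relative to the initial Hessian
approximation `γ • 1` and the curvature threshold `η`; the stochastic damped L-BFGS method takes
`η = 1 / 4`. For `η ≤ 1` and `0 ≤ γ` the denominator is positive whenever the quotient is used. -/
noncomputable def dampingParameter (η γ : ℝ) (s y : E) : ℝ :=
  if ⟪s, y⟫ < η * γ * ⟪s, s⟫ then (1 - η) * γ * ⟪s, s⟫ / (γ * ⟪s, s⟫ - ⟪s, y⟫) else 1

/-- The damped gradient difference `ȳ = θ y + (1 - θ) γ s`, which replaces `y` in the L-BFGS update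
so that the curvature along `s` stays positive. -/
noncomputable def dampedDifference (η γ : ℝ) (s y : E) : E :=
  dampingParameter η γ s y • y + (1 - dampingParameter η γ s y) • γ • s

lemma inner_lt_mul_inner_self_of_lt_threshold (hη : η ≤ 1) (hγ : 0 ≤ γ)
    (h : ⟪s, y⟫ < η * γ * ⟪s, s⟫) : ⟪s, y⟫ < γ * ⟪s, s⟫ :=
  h.trans_le <| mul_le_mul_of_nonneg_right (mul_le_of_le_one_left hγ hη) real_inner_self_nonneg

lemma dampingParameter_mem_Icc (hη : η ≤ 1) (hγ : 0 ≤ γ) :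
    dampingParameter η γ s y ∈ Set.Icc 0 1 := by
  unfold dampingParameter
  split_ifs with h
  · have hden : 0 < γ * ⟪s, s⟫ - ⟪s, y⟫ :=
      sub_pos.mpr (inner_lt_mul_inner_self_of_lt_threshold hη hγ h)
    have hnum : 0 ≤ (1 - η) * γ * ⟪s, s⟫ :=
      mul_nonneg (mul_nonneg (sub_nonneg.mpr hη) hγ) real_inner_self_nonneg
    exact ⟨div_nonneg hnum hden.le, (div_le_one hden).mpr (by linarith)⟩
  · exact ⟨zero_le_one, le_rfl⟩

lemma inner_dampedDifference (hη : η ≤ 1) (hγ : 0 ≤ γ) :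
    ⟪s, dampedDifference η γ s y⟫ = max (η * γ * ⟪s, s⟫) ⟪s, y⟫ := by
  simp only [dampedDifference, dampingParameter, inner_add_right, real_inner_smul_right]
  split_ifs with h
  · have hden : γ * ⟪s, s⟫ - ⟪s, y⟫ ≠ 0 :=
      (sub_pos.mpr (inner_lt_mul_inner_self_of_lt_threshold hη hγ h)).ne'
    rw [max_eq_left h.le]
    linear_combination -div_mul_cancel₀ ((1 - η) * γ * ⟪s, s⟫) hden
  · rw [max_eq_right (not_lt.mp h)]
    ring

lemma mul_inner_self_le_inner_dampedDifference (hη : η ≤ 1) (hγ : 0 ≤ γ) :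
    η * γ * ⟪s, s⟫ ≤ ⟪s, dampedDifference η γ s y⟫ :=
  (le_max_left _ _).trans_eq (inner_dampedDifference hη hγ).symm

lemma norm_dampedDifference_le_max (hη : η ≤ 1) (hγ : 0 ≤ γ) :
    ‖dampedDifference η γ s y‖ ≤ max ‖y‖ ‖γ • s‖ := by
  obtain ⟨hθ_nonneg, hθ_le_one⟩ := dampingParameter_mem_Icc (s := s) (y := y) hη hγ
  exact convexOn_univ_norm.le_on_segment' (Set.mem_univ _) (Set.mem_univ _) hθ_nonneg
    (sub_nonneg.mpr hθ_le_one) (add_sub_cancel _ _)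

lemma norm_dampedDifference_le_mul_norm (hη : η ≤ 1) (hγ : 0 ≤ γ) (hy : ‖y‖ ≤ κ * ‖s‖) :
    ‖dampedDifference η γ s y‖ ≤ max κ γ * ‖s‖ :=
  calc ‖dampedDifference η γ s y‖
      ≤ max ‖y‖ ‖γ • s‖ := norm_dampedDifference_le_max hη hγ
    _ ≤ max (κ * ‖s‖) (γ * ‖s‖) :=
        max_le_max hy (norm_smul_of_nonneg hγ s).le
    _ = max κ γ * ‖s‖ := (max_mul_of_nonneg κ γ (norm_nonneg s)).symm

lemma inner_self_div_inner_dampedDifference_le (hη : η ∈ Set.Ioc 0 1) (hγ : 0 < γ) (hs : s ≠ 0)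
    (hy : ‖y‖ ≤ κ * ‖s‖) :
    ⟪dampedDifference η γ s y, dampedDifference η γ s y⟫ / ⟪s, dampedDifference η γ s y⟫ ≤
      max κ γ ^ 2 / (η * γ) := by
  have hss : 0 < ⟪s, s⟫ := real_inner_self_pos.mpr hs
  have hsq : ⟪dampedDifference η γ s y, dampedDifference η γ s y⟫ ≤ max κ γ ^ 2 * ⟪s, s⟫ := by
    rw [real_inner_self_eq_norm_sq, real_inner_self_eq_norm_sq, ← mul_pow]
    exact pow_le_pow_left₀ (norm_nonneg _) (norm_dampedDifference_le_mul_norm hη.2 hγ.le hy) 2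
  calc ⟪dampedDifference η γ s y, dampedDifference η γ s y⟫ / ⟪s, dampedDifference η γ s y⟫
      ≤ max κ γ ^ 2 * ⟪s, s⟫ / (η * γ * ⟪s, s⟫) :=
        div_le_div₀ (by positivity) hsq (mul_pos (mul_pos hη.1 hγ) hss)
          (mul_inner_self_le_inner_dampedDifference hη.2 hγ.le)
    _ = max κ γ ^ 2 / (η * γ) := mul_div_mul_right _ _ hss.ne'

lemma max_sq_div_le_sq_div_add (hδ : 0 < δ) (hγ : γ ∈ Set.Icc δ Γ) :
    max κ γ ^ 2 / γ ≤ κ ^ 2 / δ + Γ := by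
  have hγ_pos : 0 < γ := hδ.trans_le hγ.1
  have hmax : max κ γ ^ 2 ≤ κ ^ 2 + γ ^ 2 := by
    rcases max_choice κ γ with h | h <;> rw [h] <;> simp [sq_nonneg]
  calc max κ γ ^ 2 / γ
      ≤ (κ ^ 2 + γ ^ 2) / γ := by gcongr
    _ = κ ^ 2 / γ + γ := by field_simp
    _ ≤ κ ^ 2 / δ + Γ := by gcongr; exacts [hγ.1, hγ.2]

theorem damped_ybar_curvature_and_bound_general (hη : η ∈ Set.Ioc 0 1) (hδ : 0 < δ)
    (hγ : γ ∈ Set.Icc δ Γ) (hs : s ≠ 0) (hy : ‖y‖ ≤ κ * ‖s‖) :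
    (η * γ * ⟪s, s⟫ ≤ ⟪s, dampedDifference η γ s y⟫ ∧ 0 < η * γ * ⟪s, s⟫) ∧
    ⟪dampedDifference η γ s y, dampedDifference η γ s y⟫ / ⟪s, dampedDifference η γ s y⟫ ≤
      (κ ^ 2 / δ + Γ) / η := by
  have hγ_pos : 0 < γ := hδ.trans_le hγ.1
  refine ⟨⟨mul_inner_self_le_inner_dampedDifference hη.2 hγ_pos.le,
    mul_pos (mul_pos hη.1 hγ_pos) (real_inner_self_pos.mpr hs)⟩, ?_⟩
  refine (inner_self_div_inner_dampedDifference_le hη hγ_pos hs hy).trans ?_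
  rw [mul_comm η γ, ← div_div]
  exact div_le_div_of_nonneg_right (max_sq_div_le_sq_div_add hδ hγ) hη.1.le

end Damping

theorem damped_ybar_curvature_and_bound
    {n : ℕ} (hn : 1 ≤ n)
    (κ δ γ : ℝ) (hκ : 0 < κ) (hδ : 0 < δ) (hγ : γ ∈ Set.Icc δ (κ + δ))
    (s y : EuclideanSpace ℝ (Fin n)) (hs : s ≠ 0) (hy : ‖y‖ ≤ κ * ‖s‖)
    (θ : ℝ)
    (hθ : θ = if ⟪s, y⟫ < 0.25 * γ * ⟪s, s⟫
        then 0.75 * γ * ⟪s, s⟫ / (γ * ⟪s, s⟫ - ⟪s, y⟫) else 1)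
    (ybar : EuclideanSpace ℝ (Fin n)) (hybar : ybar = θ • y + (1 - θ) • γ • s) :
    (0.25 * γ * ⟪s, s⟫ ≤ ⟪s, ybar⟫ ∧ 0 < 0.25 * γ * ⟪s, s⟫) ∧
    ⟪ybar, ybar⟫ / ⟪s, ybar⟫ ≤ 4 * κ ^ 2 / δ + 4 * (κ + δ) := by
  rw [show (0.75 : ℝ) = 1 - 0.25 by norm_num, ← dampingParameter] at hθ
  rw [hθ, ← dampedDifference] at hybar
  rw [hybar, show 4 * κ ^ 2 / δ + 4 * (κ + δ) = (κ ^ 2 / δ + (κ + δ)) / 0.25 by ring]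
  exact damped_ybar_curvature_and_bound_general (by norm_num) hδ hγ hs hy
end
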